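/- Under the stated hypotheses on G, the eigenvector x satisfies x_2 + x_0 > x_1. -/

import Mathlib

open Matrix

/-- The signless Laplacian `Q(G) = D(G) + A(G)` of a finite simple graph `G`. -/
noncomputable def signlessLaplacian {V : Type*} [Fintype V] (G : SimpleGraph V) :
    Matrix V V ℝ :=
  letI := Classical.decEq V
  letI : DecidableRel G.Adj := Classical.decRel _
  Matrix.diagonal (fun v => (G.degree v : ℝ)) + G.adjMatrix ℝ

/-- The `Q`-index of `G`: the largest eigenvalue of the signless Laplacian `Q(G)`. -/
noncomputable def qIndex {V : Type*} [Fintype V] (G : SimpleGraph V) : ℝ :=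
  letI := Classical.decEq V
  sSup (spectrum ℝ (signlessLaplacian G))

/-!
If `x` is a positive eigenvector of `Q(G)` with eigenvalue `q`, the row of a vertex `v` reads
`(q - d(v) + 1) x_v = ∑_{i ∈ N[v]} x_i`. When `N[v] = N[u] ∪ {w}` with `w ∉ N[u]`, we have
`d(v) = d(u) + 1`, and comparing the rows of `u` and `v` gives
`(q - d(u)) (x_v - x_u) = x_w + x_u`, so `x_u < x_v`. If moreover `d(u) < d(w)`, the row of `w`
yields `(q - d(u) - 1) x_w ≥ (q - d(w)) x_w ≥ x_v > x_u`, whence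
`(q - d(u)) (x_w + x_u - x_v) = (q - d(u) - 1) x_w - x_u > 0`. The theorem is the case
`(u, v, w) = (v_0, v_1, v_2)`.
-/

section

variable {V : Type*} [Fintype V] {G : SimpleGraph V} [DecidableRel G.Adj]
  {x : V → ℝ} {q : ℝ} {u v w : V}

lemma signlessLaplacian_mulVec_apply (G : SimpleGraph V) [DecidableRel G.Adj]
    (x : V → ℝ) (v : V) :
    (signlessLaplacian G *ᵥ x) v = G.degree v * x v + ∑ i ∈ G.neighborFinset v, x i := by
  classical
  simp only [signlessLaplacian, add_mulVec, Pi.add_apply, mulVec_diagonal,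
    SimpleGraph.adjMatrix_mulVec_apply]
  congr!

lemma sub_degree_mul_eq_sum_neighborFinset (hx : signlessLaplacian G *ᵥ x = q • x) (v : V) :
    (q - G.degree v) * x v = ∑ i ∈ G.neighborFinset v, x i := by
  have hrow := congrFun hx v
  rw [signlessLaplacian_mulVec_apply, Pi.smul_apply, smul_eq_mul] at hrow
  linarith

lemma le_sub_degree_mul_of_adj (hpos : ∀ i, 0 < x i)
    (hx : signlessLaplacian G *ᵥ x = q • x) (h : G.Adj v w) :
    x w ≤ (q - G.degree v) * x v := by
  rw [sub_degree_mul_eq_sum_neighborFinset hx]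
  exact Finset.single_le_sum (fun i _ ↦ (hpos i).le) ((G.mem_neighborFinset v w).2 h)

lemma degree_lt_of_adj (hpos : ∀ i, 0 < x i)
    (hx : signlessLaplacian G *ᵥ x = q • x) (h : G.Adj v w) : G.degree v < q :=
  sub_pos.1 <| pos_of_mul_pos_left
    ((hpos w).trans_le (le_sub_degree_mul_of_adj hpos hx h)) (hpos v).le

variable [DecidableEq V]

lemma sum_insert_neighborFinset (hx : signlessLaplacian G *ᵥ x = q • x) (v : V) :
    ∑ i ∈ insert v (G.neighborFinset v), x i = (q - G.degree v + 1) * x v := by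
  rw [Finset.sum_insert (G.notMem_neighborFinset_self v),
    ← sub_degree_mul_eq_sum_neighborFinset hx]
  ring

lemma degree_eq_add_one_of_insert_neighborFinset_eq (hw : w ∉ insert u (G.neighborFinset u))
    (hv : insert v (G.neighborFinset v) = insert w (insert u (G.neighborFinset u))) :
    G.degree v = G.degree u + 1 := by
  have hcard := congrArg Finset.card hv
  rwa [Finset.card_insert_of_notMem hw,
    Finset.card_insert_of_notMem (G.notMem_neighborFinset_self u),
    Finset.card_insert_of_notMem (G.notMem_neighborFinset_self v),
    G.card_neighborFinset_eq_degree, G.card_neighborFinset_eq_degree, add_left_inj] at hcard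

lemma adj_and_adj_of_insert_neighborFinset_eq (hw : w ∉ insert u (G.neighborFinset u))
    (hv : insert v (G.neighborFinset v) = insert w (insert u (G.neighborFinset u))) :
    G.Adj u v ∧ G.Adj w v := by
  have hwv : w ∈ insert v (G.neighborFinset v) := by simp [hv]
  have huv : u ∈ insert v (G.neighborFinset v) := by simp [hv]
  have hne : u ≠ v := by
    rintro rfl
    exact hw hwv
  simp only [Finset.mem_insert, G.mem_neighborFinset, not_or] at hw hwv huv
  have hadj : G.Adj u v := (huv.resolve_left hne).symm
  refine ⟨hadj, (hwv.resolve_left ?_).symm⟩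
  rintro rfl
  exact hw.2 hadj

lemma sub_degree_mul_sub_eq_add (hx : signlessLaplacian G *ᵥ x = q • x)
    (hw : w ∉ insert u (G.neighborFinset u))
    (hv : insert v (G.neighborFinset v) = insert w (insert u (G.neighborFinset u))) :
    (q - G.degree u) * (x v - x u) = x w + x u := by
  have hsum : (q - G.degree v + 1) * x v = x w + (q - G.degree u + 1) * x u := by
    rw [← sum_insert_neighborFinset hx, ← sum_insert_neighborFinset hx, hv, Finset.sum_insert hw]
  rw [degree_eq_add_one_of_insert_neighborFinset_eq hw hv] at hsum
  push_cast at hsum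
  linarith

lemma lt_of_insert_neighborFinset_eq (hpos : ∀ i, 0 < x i)
    (hx : signlessLaplacian G *ᵥ x = q • x) (hw : w ∉ insert u (G.neighborFinset u))
    (hv : insert v (G.neighborFinset v) = insert w (insert u (G.neighborFinset u))) :
    x u < x v := by
  have hq := degree_lt_of_adj hpos hx (adj_and_adj_of_insert_neighborFinset_eq hw hv).1
  refine sub_pos.1 (pos_of_mul_pos_right ?_ (sub_pos.2 hq).le)
  rw [sub_degree_mul_sub_eq_add hx hw hv]
  exact add_pos (hpos w) (hpos u)

theorem stmt_6_general (hpos : ∀ i, 0 < x i) (hx : signlessLaplacian G *ᵥ x = q • x)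
    (hw : w ∉ insert u (G.neighborFinset u))
    (hv : insert v (G.neighborFinset v) = insert w (insert u (G.neighborFinset u)))
    (hdeg : G.degree u < G.degree w) : x v < x w + x u := by
  obtain ⟨huv, hwv⟩ := adj_and_adj_of_insert_neighborFinset_eq hw hv
  have hq := degree_lt_of_adj hpos hx huv
  have hdeg' : (G.degree u + 1 : ℝ) ≤ G.degree w := mod_cast hdeg
  have hlt : x u < (q - G.degree u - 1) * x w := calc
    x u < x v := lt_of_insert_neighborFinset_eq hpos hx hw hv
    _ ≤ (q - G.degree w) * x w := le_sub_degree_mul_of_adj hpos hx hwv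
    _ ≤ (q - G.degree u - 1) * x w :=
      mul_le_mul_of_nonneg_right (by linarith) (hpos w).le
  have hmul : 0 < (q - G.degree u) * (x w + x u - x v) := by
    linarith [sub_degree_mul_sub_eq_add hx hw hv]
  exact sub_pos.1 (pos_of_mul_pos_right hmul (sub_pos.2 hq).le)

end

/-- for the maximal outer-planar graph of type `D_1` with `Δ = n - 3`,
the Perron eigenvector satisfies `x_2 + x_0 > x_1`. -/
theorem stmt_6 (n k : ℕ) (hn : 7 ≤ n) (hk1 : 4 ≤ k) (hk2 : k ≤ n - 3)
    (G : SimpleGraph (Fin n))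
    (h0 : G.neighborSet ⟨0, by omega⟩ = {⟨1, by omega⟩, ⟨n - 1, by omega⟩})
    (h1 : G.neighborSet ⟨1, by omega⟩ =
      {⟨0, by omega⟩, ⟨2, by omega⟩, ⟨n - 1, by omega⟩})
    (h2 : G.neighborSet ⟨2, by omega⟩ =
      {⟨1, by omega⟩, ⟨3, by omega⟩, ⟨k, by omega⟩, ⟨n - 1, by omega⟩})
    (hlast : G.neighborSet ⟨n - 1, by omega⟩ =
      {⟨0, by omega⟩, ⟨1, by omega⟩, ⟨2, by omega⟩, ⟨k, by omega⟩, ⟨n - 2, by omega⟩})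
    (hk' : G.neighborSet ⟨k, by omega⟩ =
      {u : Fin n | 2 ≤ u.val ∧ u ≠ ⟨k, by omega⟩})
    (x : Fin n → ℝ) (hpos : ∀ i, 0 < x i)
    (heig : (signlessLaplacian G).mulVec x = qIndex G • x) :
    x ⟨1, by omega⟩ < x ⟨2, by omega⟩ + x ⟨0, by omega⟩ := by
  classical
  have hN0 : G.neighborFinset ⟨0, by omega⟩ = {⟨1, by omega⟩, ⟨n - 1, by omega⟩} :=
    Finset.coe_injective (by simpa using h0)
  have hN1 : G.neighborFinset ⟨1, by omega⟩ =
      {⟨0, by omega⟩, ⟨2, by omega⟩, ⟨n - 1, by omega⟩} :=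
    Finset.coe_injective (by simpa using h1)
  have hN2 : G.neighborFinset ⟨2, by omega⟩ =
      {⟨1, by omega⟩, ⟨3, by omega⟩, ⟨k, by omega⟩, ⟨n - 1, by omega⟩} :=
    Finset.coe_injective (by simpa using h2)
  refine stmt_6_general hpos heig ?notMem ?closed ?degree
  case notMem => rw [hN0]; grind
  case closed => rw [hN0, hN1]; grind
  case degree =>
    rw [← G.card_neighborFinset_eq_degree, ← G.card_neighborFinset_eq_degree, hN0, hN2]
    grind
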